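/- Let B(q) be the 2×2 matrix over ℚ(q) with rows ( [6]_q, −[3]_q ) and ( −[3]_q, [2]_q ) (the symmetrized q-Cartan matrix of type G_2 in the paper's conventions). Set w_1 = (⟨2⟩_q/⟨6⟩_q)·( ([2]_q/[3]_q) e_1 + e_2 ) and w_2 = (⟨2⟩_q/⟨6⟩_q)·( e_1 + ⟨3⟩_q e_2 ). Then B(q) · w_i = e_i for i = 1,2 (so w_i is the i-th column of B(q)^{−1}), and moreover every coordinate of [12]_q · w_i lies in ℕ[q,q^{−1}]. -/

import Mathlib

/-!
Everything reduces to three identities between quantum numbers: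
`[6] = [3]⟨3⟩`, `[12] = [6]⟨6⟩`, and `⟨2⟩([2]⟨3⟩ - [3]) = ⟨6⟩` (the last one says that
`det B(q) = [3]⟨6⟩/⟨2⟩`), together with `[3] ≠ 0` and `⟨6⟩ ≠ 0`. The first and the last give
`B(q) w_i = e_i`. By the first two, the coordinates of `[12] w_1` are `⟨3⟩⟨2⟩[2]` and `[6]⟨2⟩`,
and those of `[12] w_2` are `[6]⟨2⟩` and `[6]⟨2⟩⟨3⟩`; these are products of elements of
`ℕ[q,q⁻¹]`, which is closed under sums and products.
-/

set_option synthInstance.maxHeartbeats 1000000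

/-- The variable `q`, as an element of the field `ℚ(q)` of rational functions. -/
noncomputable def qq : RatFunc ℚ := RatFunc.X

/-- The quantum number `[m]_q = (q^m − q^{−m})/(q − q^{−1}) = Σ_{i=0}^{m−1} q^{m−1−2i}`. -/
noncomputable def qNum (m : ℕ) : RatFunc ℚ :=
  ∑ i ∈ Finset.range m, qq ^ ((m : ℤ) - 1 - 2 * (i : ℤ))

/-- `⟨m⟩_q = q^m + q^{−m}`. -/
noncomputable def qWh (m : ℕ) : RatFunc ℚ := qq ^ (m : ℤ) + qq ^ (-(m : ℤ))

/-- An element of `ℚ(q)` lies in `ℕ[q,q^{−1}]` if it is a Laurent polynomial in `q`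
with nonnegative integer coefficients. -/
def IsNatLaurent (f : RatFunc ℚ) : Prop :=
  ∃ c : ℤ →₀ ℕ, f = c.sum fun k n => (n : RatFunc ℚ) * qq ^ k

lemma qq_ne_zero : qq ≠ 0 := RatFunc.X_ne_zero

lemma IsNatLaurent.zero : IsNatLaurent 0 := ⟨0, by simp⟩

lemma IsNatLaurent.monomial (n : ℕ) (k : ℤ) : IsNatLaurent ((n : RatFunc ℚ) * qq ^ k) :=
  ⟨Finsupp.single k n, by simp⟩

lemma IsNatLaurent.zpow (k : ℤ) : IsNatLaurent (qq ^ k) := by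
  simpa using IsNatLaurent.monomial 1 k

lemma IsNatLaurent.add {f g : RatFunc ℚ} (hf : IsNatLaurent f) (hg : IsNatLaurent g) :
    IsNatLaurent (f + g) := by
  obtain ⟨c, rfl⟩ := hf
  obtain ⟨d, rfl⟩ := hg
  refine ⟨c + d, ?_⟩
  rw [Finsupp.sum_add_index']
  · simp
  · intro k m n
    push_cast
    ring

lemma IsNatLaurent.sum {ι : Type*} (s : Finset ι) (f : ι → RatFunc ℚ)
    (h : ∀ i ∈ s, IsNatLaurent (f i)) : IsNatLaurent (∑ i ∈ s, f i) :=
  Finset.sum_induction f IsNatLaurent (fun _ _ => IsNatLaurent.add) IsNatLaurent.zero h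

lemma IsNatLaurent.mul {f g : RatFunc ℚ} (hf : IsNatLaurent f) (hg : IsNatLaurent g) :
    IsNatLaurent (f * g) := by
  obtain ⟨c, rfl⟩ := hf
  obtain ⟨d, rfl⟩ := hg
  rw [Finsupp.sum, Finsupp.sum, Finset.sum_mul_sum]
  refine IsNatLaurent.sum _ _ fun k _ => IsNatLaurent.sum _ _ fun l _ => ?_
  have h := IsNatLaurent.monomial (c k * d l) (k + l)
  rw [zpow_add₀ qq_ne_zero] at h
  push_cast at h
  convert h using 1
  ring

lemma isNatLaurent_qNum (m : ℕ) : IsNatLaurent (qNum m) :=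
  IsNatLaurent.sum _ _ fun _ _ => IsNatLaurent.zpow _

lemma isNatLaurent_qWh (m : ℕ) : IsNatLaurent (qWh m) :=
  (IsNatLaurent.zpow _).add (IsNatLaurent.zpow _)

lemma qNum_two : qNum 2 = qq + qq⁻¹ := by
  simp [qNum, Finset.sum_range_succ]

lemma qNum_three : qNum 3 = qq ^ 2 + 1 + (qq ^ 2)⁻¹ := by
  simp [qNum, Finset.sum_range_succ]

lemma qWh_eq (m : ℕ) : qWh m = qq ^ m + (qq ^ m)⁻¹ := by
  simp [qWh]

/-- `[2m]_q = [m]_q ⟨m⟩_q`: the `2m` exponents of `[2m]_q` are those of `[m]_q` shifted by `m`,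
followed by those shifted by `-m`. -/
lemma qNum_add_self (m : ℕ) : qNum (m + m) = qNum m * qWh m := by
  rw [qNum, Finset.sum_range_add, qNum, qWh, mul_add, Finset.sum_mul, Finset.sum_mul]
  congr 1 <;>
  · refine Finset.sum_congr rfl fun i _ => ?_
    rw [← zpow_add₀ qq_ne_zero]
    congr 1
    push_cast
    ring

lemma qNum_six : qNum 6 = qNum 3 * qWh 3 := qNum_add_self 3

lemma qNum_twelve : qNum 12 = qNum 6 * qWh 6 := qNum_add_self 6

lemma qNum_three_ne_zero : qNum 3 ≠ 0 := by
  intro h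
  rw [qNum_three] at h
  have hq := qq_ne_zero
  have h1 : qq ^ 4 + qq ^ 2 + 1 = 0 := by
    field_simp at h
    linear_combination h
  have h2 : algebraMap (Polynomial ℚ) (RatFunc ℚ)
      (Polynomial.X ^ 4 + Polynomial.X ^ 2 + 1) = 0 := by
    simpa [qq, RatFunc.algebraMap_X] using h1
  have h3 := (map_eq_zero_iff _ (RatFunc.algebraMap_injective ℚ)).1 h2
  simpa using congrArg (Polynomial.eval 0) h3

lemma qWh_six_ne_zero : qWh 6 ≠ 0 := by
  intro h
  rw [qWh_eq] at h
  have hq := qq_ne_zero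
  have h1 : qq ^ 12 + 1 = 0 := by
    field_simp at h
    linear_combination h
  have h2 : algebraMap (Polynomial ℚ) (RatFunc ℚ) (Polynomial.X ^ 12 + 1) = 0 := by
    simpa [qq, RatFunc.algebraMap_X] using h1
  have h3 := (map_eq_zero_iff _ (RatFunc.algebraMap_injective ℚ)).1 h2
  simpa using congrArg (Polynomial.eval 0) h3

/-- The determinant identity: `[3]` times the left-hand side is `⟨2⟩ det B(q)`. -/
lemma qWh_two_mul : qWh 2 * (qNum 2 * qWh 3 - qNum 3) = qWh 6 := by
  have hq := qq_ne_zero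
  rw [qNum_two, qNum_three, qWh_eq, qWh_eq, qWh_eq]
  field_simp
  ring

/-- For the symmetrized `q`-Cartan matrix `B(q)` of type `G_2`, the explicit vectors `w i`
satisfy `B(q) ⬝ w i = e_i` (so `w i` is the `i`-th column of `B(q)⁻¹`), and every
coordinate of `[12]_q · w i` lies in `ℕ[q,q⁻¹]`. -/
theorem typeG2_qCartan_coweights
    (B : Matrix (Fin 2) (Fin 2) (RatFunc ℚ))
    (hB : B = !![qNum 6, -qNum 3;
                 -qNum 3, qNum 2])
    (w : Fin 2 → Fin 2 → RatFunc ℚ)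
    (hw : w = ![(qWh 2 / qWh 6) • ![qNum 2 / qNum 3, 1],
                (qWh 2 / qWh 6) • ![1, qWh 3]]) :
    (∀ i : Fin 2, B.mulVec (w i) = Pi.single i 1) ∧
      (∀ i j : Fin 2, IsNatLaurent (qNum 12 * w i j)) := by
  have h3 := qNum_three_ne_zero
  have h6 := qWh_six_ne_zero
  have hdet := qWh_two_mul
  subst hB hw
  constructor
  · intro i
    fin_cases i <;> ext j <;> fin_cases j <;>
      simp [Matrix.mulVec, dotProduct, Fin.sum_univ_two, qNum_six] <;> field_simp <;>
      first
        | linear_combination hdet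
        | ring
  · intro i j
    have n2 := isNatLaurent_qNum 2
    have n6 := isNatLaurent_qNum 6
    have a2 := isNatLaurent_qWh 2
    have a3 := isNatLaurent_qWh 3
    fin_cases i <;> fin_cases j
    · convert (a3.mul a2).mul n2 using 1
      simp [qNum_twelve, qNum_six]
      field_simp
    · convert n6.mul a2 using 1
      simp [qNum_twelve]
      field_simp
    · convert n6.mul a2 using 1
      simp [qNum_twelve]
      field_simp
    · convert (n6.mul a2).mul a3 using 1
      simp [qNum_twelve]
      field_simp
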